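/- Let R be a finite abelian group that is not cyclic. Then for every subgroup H of R there exists an automorphism α of R with α(H) = H that is not a power automorphism, i.e., α(x) ∉ ⟨x⟩ for some x ∈ R. -/

import Mathlib

theorem aux_cyc (R : Type*) [CommGroup R] [Finite R]
    (h : ∀ p : ℕ, p.Prime → Nat.card (powMonoidHom p : R →* R).ker ≤ p) : IsCyclic R := by
  classical
  have := Fintype.ofFinite R
  have key : ∀ n : ℕ, 0 < n → Nat.card (powMonoidHom n : R →* R).ker ≤ n := by
    intro n
    induction n using induction_on_primes with
    | zero => intro h0; omega
    | one =>
      intro _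
      have : (powMonoidHom 1 : R →* R).ker = ⊥ := by
        ext x; simp [MonoidHom.mem_ker]
      rw [this]; simp
    | prime_mul p m hp ih =>
      intro hpm
      have hm : 0 < m := Nat.pos_of_mul_pos_left hpm
      let K := (powMonoidHom (p * m) : R →* R).ker
      let g : K →* R := (powMonoidHom p : R →* R).comp K.subtype
      have h1 : Nat.card g.ker ≤ p := by
        refine le_trans ?_ (h p hp)
        refine Nat.card_le_card_of_injective
          (fun x => (⟨x.1.1, MonoidHom.mem_ker.1 x.2⟩ :
            (powMonoidHom p : R →* R).ker)) ?_
        intro a b hab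
        exact Subtype.ext (Subtype.ext (congrArg (fun t => t.1) hab))
      have h2 : Nat.card g.range ≤ m := by
        refine le_trans ?_ (ih hm)
        apply Subgroup.card_le_of_le
        rintro _ ⟨x, rfl⟩
        have := x.2
        simp only [K, MonoidHom.mem_ker, powMonoidHom_apply] at this
        simp [g, MonoidHom.mem_ker, ← pow_mul, this]
      have h3 : Nat.card K = Nat.card g.ker * Nat.card g.range := by
        rw [← Subgroup.index_ker g]
        exact (Subgroup.card_mul_index g.ker).symm
      change Nat.card K ≤ _
      rw [h3]
      exact Nat.mul_le_mul h1 h2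
  apply isCyclic_of_card_pow_eq_one_le
  intro n hn
  have := key n hn
  rw [Nat.card_eq_fintype_card, Fintype.card_subtype] at this
  simpa [MonoidHom.mem_ker] using this

theorem aux_dual0 (K V : Type*) [Field K] [AddCommGroup V] [Module K V]
    (x : V) (hx : x ≠ 0) : ∃ f : V →+ K, f x ≠ 0 := by
  by_contra! hh
  exact hx ((Module.forall_dual_apply_eq_zero_iff K x).1 fun f => hh f.toAddMonoidHom)

theorem aux_dual (p : ℕ) [Fact p.Prime] (V : Type*) [AddCommGroup V]
    (h : ∀ x : V, p • x = 0) (x : V) (hx : x ≠ 0) : ∃ f : V →+ ZMod p, f x ≠ 0 :=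
  @aux_dual0 (ZMod p) V _ _ (AddCommGroup.zmodModule h) x hx

theorem aux_hom (p : ℕ) [Fact p.Prime] (Q : Type*) [CommGroup Q] [Finite Q]
    (h : p ∣ Nat.card Q) : ∃ φ : Q →* Multiplicative (ZMod p), ∃ x, φ x ≠ 1 := by
  obtain ⟨c, hc⟩ := exists_prime_orderOf_dvd_card' p h
  have hns : ¬ Function.Surjective (powMonoidHom p : Q →* Q) := by
    intro hs
    have hi := Finite.injective_iff_surjective.2 hs
    have : c = 1 := hi (by simp [← hc, pow_orderOf_eq_one])
    subst this
    simp at hc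
    exact (Fact.out : p.Prime).one_lt.ne hc
  let S := (powMonoidHom p : Q →* Q).range
  obtain ⟨x, hx⟩ : ∃ x : Q, x ∉ S := by
    by_contra! hh
    exact hns fun x => hh x
  have hx' : Additive.ofMul (QuotientGroup.mk x : Q ⧸ S) ≠ 0 := by
    intro h0
    rw [ofMul_eq_zero, QuotientGroup.eq_one_iff] at h0
    exact hx h0
  obtain ⟨f, hf⟩ := aux_dual p (Additive (Q ⧸ S)) (by
    intro y
    induction y using Additive.rec with | ofMul y => ?_
    induction y using QuotientGroup.induction_on with | H y => ?_
    rw [← ofMul_pow, ← QuotientGroup.mk_pow, ofMul_eq_zero, QuotientGroup.eq_one_iff]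
    exact ⟨y, rfl⟩) _ hx'
  refine ⟨(AddMonoidHom.toMultiplicativeRight f).comp (QuotientGroup.mk' S), x, ?_⟩
  intro h1
  exact hf h1

theorem aux_z (p : ℕ) [Fact p.Prime] (R : Type*) [CommGroup R] [Finite R]
    (hp : p < Nat.card (powMonoidHom p : R →* R).ker)
    (φ : R →* Multiplicative (ZMod p)) (hφ : ∃ x, φ x ≠ 1) :
    ∃ z x : R, z ^ p = 1 ∧ φ z = 1 ∧ φ x ≠ 1 ∧ z ∉ Subgroup.zpowers x := by
  classical
  by_cases hy : ∃ y : R, y ^ p = 1 ∧ φ y ≠ 1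
  · obtain ⟨y, hy, hφy⟩ := hy
    have : ¬ Function.Injective (fun a : (powMonoidHom p : R →* R).ker => φ a.1) := by
      intro hi
      have := Nat.card_le_card_of_injective _ hi
      have h2 : Nat.card (Multiplicative (ZMod p)) = p := by simp
      omega
    simp only [Function.Injective] at this
    push Not at this
    obtain ⟨a, b, hab, hne⟩ := this
    have ha : a.1 ^ p = 1 := MonoidHom.mem_ker.1 a.2
    have hb : b.1 ^ p = 1 := MonoidHom.mem_ker.1 b.2
    have hz : φ (a.1 / b.1) = 1 := by rw [map_div, hab, div_self']
    refine ⟨a.1 / b.1, y, by rw [div_pow, ha, hb, div_one], hz, hφy, ?_⟩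
    rintro ⟨n, hn⟩
    simp only at hn
    rw [← hn, map_zpow] at hz
    have h1 : (orderOf (φ y) : ℤ) ∣ n := orderOf_dvd_iff_zpow_eq_one.2 hz
    have h2 : orderOf (φ y) = p := orderOf_eq_prime (by rw [← map_pow, hy, map_one]) hφy
    rw [h2] at h1
    obtain ⟨k, rfl⟩ := h1
    rw [zpow_mul, zpow_natCast, hy, one_zpow] at hn
    exact hne (Subtype.ext (div_eq_one.1 hn.symm))
  · push Not at hy
    obtain ⟨x, hx⟩ := hφ
    by_contra! hh
    have hsub : ∀ z : R, z ^ p = 1 → z ∈ Subgroup.zpowers x :=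
      fun z hz => hh z x hz (hy z hz) hx
    have := Fintype.ofFinite (Subgroup.zpowers x)
    have hc := IsCyclic.card_pow_eq_one_le (α := Subgroup.zpowers x) (n := p)
      (Fact.out : p.Prime).pos
    have hle : Nat.card (powMonoidHom p : R →* R).ker ≤
        Nat.card {a : Subgroup.zpowers x // a ^ p = 1} := by
      have hk : ∀ a : (powMonoidHom p : R →* R).ker, a.1 ^ p = 1 := fun a => MonoidHom.mem_ker.1 a.2
      refine Nat.card_le_card_of_injective
        (fun a => ⟨⟨a.1, hsub a.1 (hk a)⟩, Subtype.ext (hk a)⟩) ?_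
      intro a b hab
      exact Subtype.ext (congrArg (fun t => t.1.1) hab)
    rw [Nat.card_eq_fintype_card (α := {a : Subgroup.zpowers x // a ^ p = 1}),
      Fintype.card_subtype] at hle
    omega

theorem aux_main (p : ℕ) [Fact p.Prime] (R : Type*) [CommGroup R] [Finite R] (H : Subgroup R)
    (φ : R →* Multiplicative (ZMod p)) (z x : R) (hz : z ^ p = 1) (hφz : φ z = 1)
    (hφx : φ x ≠ 1) (hzx : z ∉ Subgroup.zpowers x) (hH : z ∈ H ∨ ∀ h ∈ H, φ h = 1) :
    ∃ α : MulAut R, Subgroup.map α.toMonoidHom H = H ∧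
      ∃ x : R, α x ∉ Subgroup.zpowers x := by
  let v : R → ℕ := fun x => (φ x).toAdd.val
  have hv1 : ∀ x, φ x = 1 → v x = 0 := by
    intro x hx; simp [v, hx]
  have hvm : ∀ a b, z ^ v (a * b) = z ^ v a * z ^ v b := by
    intro a b
    have : v (a * b) = (v a + v b) % p := by
      simp only [v, map_mul, toAdd_mul, ZMod.val_add]
    rw [this, ← pow_add, ← pow_eq_pow_mod _ hz]
  let f : R →* R :=
    { toFun := fun x => x * z ^ v x
      map_one' := by simp [hv1 1 (map_one φ)]
      map_mul' := fun a b => by rw [hvm]; exact mul_mul_mul_comm _ _ _ _ }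
  have hf : ∀ x, f x = x * z ^ v x := fun _ => rfl
  have hinj : Function.Injective f := by
    rw [injective_iff_map_eq_one]
    intro a ha
    have h1 : φ a = 1 := by
      have := congrArg φ ha
      simpa [hf, hφz] using this
    simpa [hf, hv1 a h1] using ha
  have hbij : Function.Bijective f := ⟨hinj, Finite.injective_iff_surjective.1 hinj⟩
  refine ⟨MulEquiv.ofBijective f hbij, ?_, x, ?_⟩
  · have hle : Subgroup.map (MulEquiv.ofBijective f hbij).toMonoidHom H ≤ H := by
      rintro _ ⟨h, hh, rfl⟩
      change f h ∈ H
      rw [hf]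
      rcases hH with hH | hH
      · exact H.mul_mem hh (H.pow_mem hH _)
      · rw [hv1 h (hH h hh)]; simpa using hh
    apply Subgroup.eq_of_le_of_card_ge hle
    exact (Subgroup.card_map_of_injective (K := H) (f := (MulEquiv.ofBijective f hbij).toMonoidHom) hinj).ge
  · change f x ∉ _
    rw [hf]
    intro hm
    have h1 : z ^ v x ∈ Subgroup.zpowers x :=
      (Subgroup.mul_mem_cancel_left _ (Subgroup.mem_zpowers x)).1 hm
    have hcop : IsCoprime (v x : ℤ) (p : ℤ) := by
      rw [Nat.isCoprime_iff_coprime]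
      apply Nat.Coprime.symm
      rw [Nat.Prime.coprime_iff_not_dvd Fact.out]
      intro hd
      have hlt : v x < p := ZMod.val_lt _
      have h0 : v x = 0 := Nat.eq_zero_of_dvd_of_lt hd hlt
      exact hφx ((ZMod.val_eq_zero _).1 h0)
    obtain ⟨a, b, hab⟩ := hcop
    apply hzx
    have : z = (z ^ v x) ^ a := by
      conv_lhs => rw [← zpow_one z, ← hab, zpow_add, mul_comm b, zpow_mul z p, zpow_natCast, hz,
        one_zpow, mul_one, mul_comm a, zpow_mul, zpow_natCast]
    rw [this]
    exact Subgroup.zpow_mem _ h1 _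

/-- Let `R` be a finite abelian group that is not cyclic.  Then for every subgroup
`H` of `R` there is an automorphism of `R` fixing `H` setwise which is not a power
automorphism. -/
theorem stmt6 (R : Type*) [CommGroup R] [Finite R] (hnc : ¬ IsCyclic R) (H : Subgroup R) :
    ∃ α : MulAut R, Subgroup.map α.toMonoidHom H = H ∧
      ∃ x : R, α x ∉ Subgroup.zpowers x := by
  obtain ⟨p, hp, hlt⟩ : ∃ p : ℕ, p.Prime ∧ p < Nat.card (powMonoidHom p : R →* R).ker := by
    by_contra! hh
    exact hnc (aux_cyc R hh)
  have : Fact p.Prime := ⟨hp⟩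
  by_cases hd : p ∣ Nat.card (R ⧸ H)
  · obtain ⟨ψ, y, hy⟩ := aux_hom p (R ⧸ H) hd
    obtain ⟨y, rfl⟩ := QuotientGroup.mk_surjective y
    obtain ⟨z, x, h1, h2, h3, h4⟩ := aux_z p R hlt (ψ.comp (QuotientGroup.mk' H)) ⟨y, hy⟩
    refine aux_main p R H _ z x h1 h2 h3 h4 (Or.inr ?_)
    intro h hh
    have : (QuotientGroup.mk h : R ⧸ H) = 1 := (QuotientGroup.eq_one_iff h).2 hh
    simp [this]
  · have hdR : p ∣ Nat.card R := by
      have : Nontrivial (powMonoidHom p : R →* R).ker :=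
        Finite.one_lt_card_iff_nontrivial.1 (hp.one_lt.trans hlt)
      obtain ⟨w, hw⟩ := exists_ne (1 : (powMonoidHom p : R →* R).ker)
      have hw2 : w.1 ^ p = 1 := MonoidHom.mem_ker.1 w.2
      have : orderOf w.1 = p := orderOf_eq_prime hw2 (fun h => hw (Subtype.ext h))
      rw [← this]
      exact orderOf_dvd_natCard _
    obtain ⟨φ, hφ⟩ := aux_hom p R hdR
    obtain ⟨z, x, h1, h2, h3, h4⟩ := aux_z p R hlt φ hφ
    refine aux_main p R H _ z x h1 h2 h3 h4 (Or.inl ?_)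
    by_contra hzH
    apply hd
    have : orderOf (QuotientGroup.mk z : R ⧸ H) = p :=
      orderOf_eq_prime (by rw [← QuotientGroup.mk_pow, h1]; rfl)
        (fun h => hzH ((QuotientGroup.eq_one_iff z).1 h))
    rw [← this]
    exact orderOf_dvd_natCard _
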